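/- Let i_1 > i_2 > ⋯ > i_m be positive integers (m ≥ 1) such that i_k − i_{k+1} ≥ 2 for all 1 ≤ k ≤ m−1. If the smallest term i_m is odd, then −1 < (−1)^{i_1} φ^{−i_1} + (−1)^{i_2} φ^{−i_2} + ⋯ + (−1)^{i_m} φ^{−i_m} < 0; if i_m is even, then 0 < (−1)^{i_1} φ^{−i_1} + (−1)^{i_2} φ^{−i_2} + ⋯ + (−1)^{i_m} φ^{−i_m} < 1. -/

import Mathlib

/-!
Write `S` for the sum and `n` for its smallest index. The key estimate, `sum_bounds`, is
`φ^(-n-1) < (-1)^n S < φ^(1-n)`: the term of index `n` dominates, and only the remaining terms of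
the same parity (gaps at least 2) can increase the signed sum, only those of opposite parity
(gap at least 3) can decrease it. It follows by induction on the number of terms from
`φ^(-n) + φ^(-n-1) = φ^(1-n)`. Since `n ≥ 1`, both bounds lie in `[0, 1]`, and the sign of `S` is
`(-1)^n`.
-/

/-- The golden ratio φ = (1+√5)/2. -/
noncomputable def goldenPhi : ℝ := (1 + Real.sqrt 5) / 2

theorem goldenPhi_gt_one : 1 < goldenPhi := Real.one_lt_goldenRatio

theorem goldenPhi_zpow_rec (n : ℤ) :
    goldenPhi ^ (-n) + goldenPhi ^ (-n - 1) = goldenPhi ^ (1 - n) := by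
  have h0 : goldenPhi ≠ 0 := (zero_lt_one.trans goldenPhi_gt_one).ne'
  have hsq : goldenPhi ^ 2 = goldenPhi + 1 := Real.goldenRatio_sq
  have e1 : goldenPhi ^ (-n) = goldenPhi ^ (-n - 1) * goldenPhi := by
    rw [← zpow_add_one₀ h0]; congr 1; ring
  have e2 : goldenPhi ^ (1 - n) = goldenPhi ^ (-n - 1) * goldenPhi ^ 2 := by
    rw [← zpow_natCast, ← zpow_add₀ h0]; congr 1; push_cast; ring
  rw [e1, e2, hsq]; ring

/-- With `n = i m` the smallest index, the signed sum lies strictly between `φ^(-n-1)` and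
`φ^(1-n)`. Positivity of the indices plays no role here. -/
theorem sum_bounds (i : ℕ → ℤ) (m : ℕ) (hgap : ∀ k, k < m → i k - i (k + 1) ≥ 2) :
    goldenPhi ^ (-(i m) - 1) <
      (-1 : ℝ) ^ (i m) * ∑ k ∈ Finset.range (m + 1), (-1 : ℝ) ^ (i k) * goldenPhi ^ (-(i k)) ∧
    (-1 : ℝ) ^ (i m) * ∑ k ∈ Finset.range (m + 1), (-1 : ℝ) ^ (i k) * goldenPhi ^ (-(i k)) <
      goldenPhi ^ (1 - i m) := by
  have h1 := goldenPhi_gt_one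
  have hs : ∀ n : ℤ, (-1 : ℝ) ^ n * (-1 : ℝ) ^ n = 1 := fun n => by
    rw [← mul_zpow]; norm_num
  have hpos : ∀ n : ℤ, 0 < goldenPhi ^ n := fun n => zpow_pos (by linarith) n
  induction m with
  | zero =>
    rw [zero_add, Finset.sum_range_one, ← mul_assoc, hs, one_mul]
    exact ⟨zpow_lt_zpow_right₀ h1 (by lia), zpow_lt_zpow_right₀ h1 (by lia)⟩
  | succ m ih =>
    obtain ⟨hl, hu⟩ := ih fun k hk => hgap k (by lia)
    have hg := hgap m (by lia)
    rw [Finset.sum_range_succ, mul_add, ← mul_assoc ((-1 : ℝ) ^ i (m + 1)) ((-1 : ℝ) ^ i (m + 1)),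
      hs, one_mul]
    set S := ∑ k ∈ Finset.range (m + 1), (-1 : ℝ) ^ (i k) * goldenPhi ^ (-(i k))
    have hrec := goldenPhi_zpow_rec (i (m + 1))
    have hrec' := goldenPhi_zpow_rec (i (m + 1) + 1)
    rw [show -(i (m + 1) + 1) = -i (m + 1) - 1 by ring,
      show (1 : ℤ) - (i (m + 1) + 1) = -i (m + 1) by ring] at hrec'
    have hp := hpos (-i m - 1)
    have hlt : goldenPhi ^ (-i (m + 1) - 1) < goldenPhi ^ (-i (m + 1)) :=
      zpow_lt_zpow_right₀ h1 (by lia)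
    have hle : goldenPhi ^ (1 - i m) ≤ goldenPhi ^ (-i (m + 1) - 1) :=
      zpow_le_zpow_right₀ h1.le (by lia)
    by_cases hpar : Even (i m - i (m + 1))
    · have hsame : (-1 : ℝ) ^ i (m + 1) = (-1 : ℝ) ^ i m := by
        rw [show i m = i (m + 1) + (i m - i (m + 1)) by ring, zpow_add₀ (by norm_num),
          hpar.neg_one_zpow, mul_one]
      rw [hsame]
      constructor <;> linarith
    · have hodd := Int.not_even_iff_odd.mp hpar
      have hopp : (-1 : ℝ) ^ i (m + 1) = -(-1 : ℝ) ^ i m := by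
        rw [show i m = i (m + 1) + (i m - i (m + 1)) by ring, zpow_add₀ (by norm_num),
          hodd.neg_one_zpow, mul_neg_one, neg_neg]
      -- An odd gap that is at least 2 is at least 3.
      have hg3 : i m - i (m + 1) ≥ 3 := by
        obtain ⟨c, hc⟩ := hodd
        lia
      have hle3 : goldenPhi ^ (1 - i m) ≤ goldenPhi ^ (-i (m + 1) - 1 - 1) :=
        zpow_le_zpow_right₀ h1.le (by lia)
      rw [hopp, neg_mul]
      have := hpos (1 - i (m + 1))
      have := hpos (-i (m + 1) - 1)
      constructor <;> linarith

/-- For positive integers `i 0 > i 1 > ⋯ > i (m-1)` with consecutive gaps at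
least 2: if the smallest term `i (m-1)` is odd then
`−1 < Σ (−1)^{i_k} φ^{−i_k} < 0`; if it is even then `0 < Σ (−1)^{i_k} φ^{−i_k} < 1`. -/
theorem stmt_14 (m : ℕ) (hm : 1 ≤ m) (i : ℕ → ℤ)
    (hpos : ∀ k, k < m → 0 < i k)
    (hgap : ∀ k, k + 1 < m → i k - i (k + 1) ≥ 2) :
    (Odd (i (m - 1)) →
      -1 < ∑ k ∈ Finset.range m, (-1 : ℝ) ^ (i k) * goldenPhi ^ (-(i k)) ∧
      ∑ k ∈ Finset.range m, (-1 : ℝ) ^ (i k) * goldenPhi ^ (-(i k)) < 0) ∧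
    (Even (i (m - 1)) →
      0 < ∑ k ∈ Finset.range m, (-1 : ℝ) ^ (i k) * goldenPhi ^ (-(i k)) ∧
      ∑ k ∈ Finset.range m, (-1 : ℝ) ^ (i k) * goldenPhi ^ (-(i k)) < 1) := by
  obtain ⟨n, rfl⟩ : ∃ n, m = n + 1 := ⟨m - 1, by lia⟩
  obtain ⟨hl, hu⟩ := sum_bounds i n fun k hk => hgap k (by lia)
  have hn := hpos n (by lia)
  have h1 := goldenPhi_gt_one
  have hlow : 0 < goldenPhi ^ (-(i n) - 1) := zpow_pos (by linarith) _
  have hup : goldenPhi ^ (1 - i n) ≤ 1 := zpow_le_one_of_nonpos₀ h1.le (by lia)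
  rw [Nat.add_sub_cancel]
  constructor
  · intro h
    rw [h.neg_one_zpow, neg_one_mul] at hl hu
    constructor <;> linarith
  · intro h
    rw [h.neg_one_zpow, one_mul] at hl hu
    constructor <;> linarith
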